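/- For all positive integers m and n, the set 𝔅(m,n) of badly approximable systems of m linear forms in n variables over ℒ has Hausdorff dimension exactly mn: dim_H(𝔅(m,n)) = mn. -/

import Mathlib

/-!
Common setup: the field `ℒ = 𝔽((X⁻¹))` of formal Laurent series with coefficients
in a finite field `𝔽` of `k` elements.  We realize `ℒ` as `LaurentSeries 𝔽`
(Hahn series over `ℤ`) in the variable `T = X⁻¹`, so that `X` corresponds to `T⁻¹`
and the polynomial ring `𝔽[X]` corresponds to series supported on nonpositive
exponents.  The absolute value of `x = Σ_{i ≤ N} a_i X^i` (with `a_N ≠ 0`) is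
`k^N`, i.e. `k^(-order x)` in terms of the `T`-adic order.
-/

open scoped Classical ENNReal NNReal
open MeasureTheory

noncomputable section

namespace FSBad

/-- The field `ℒ = 𝔽((X⁻¹))`. -/
abbrev L (𝔽 : Type) [Field 𝔽] : Type := LaurentSeries 𝔽

variable {𝔽 : Type} [Field 𝔽] [Fintype 𝔽]

/-- The absolute value `‖·‖` on `ℒ`: `‖x‖ = k^(deg_X x)`, `‖0‖ = 0`. -/
def lnorm (x : L 𝔽) : ℝ := if x = 0 then 0 else (Fintype.card 𝔽 : ℝ) ^ (-x.order)

/-- Membership in the polynomial ring `𝔽[X] ⊆ ℒ` (polynomials in `X = T⁻¹`). -/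
def IsPoly (x : L 𝔽) : Prop := ∀ i : ℤ, 0 < i → x.coeff i = 0

/-- The height (sup-norm) `‖·‖_∞` on `ℒ^ι`. -/
def vnorm {ι : Type*} (x : ι → L 𝔽) : ℝ := ⨆ i, lnorm (x i)

/-- The closed ball in `ℒ^ι` with centre `c` and radius `ρ`. -/
def vball {ι : Type*} (c : ι → L 𝔽) (ρ : ℝ) : Set (ι → L 𝔽) :=
  {x | vnorm (fun i => x i - c i) ≤ ρ}

/-- `m × n` matrices over `ℒ`, identified with `ℒ^(mn)`. -/
abbrev Mat (𝔽 : Type) [Field 𝔽] (m n : ℕ) : Type := Matrix (Fin m) (Fin n) (L 𝔽)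

/-- The height of a matrix, i.e. the sup-norm on `ℒ^(mn)`. -/
def mnorm {m n : ℕ} (A : Mat 𝔽 m n) : ℝ := ⨆ p : Fin m × Fin n, lnorm (A p.1 p.2)

/-- The closed ball in `ℒ^(mn)` with centre `c` and radius `ρ`. -/
def mball {m n : ℕ} (c : Mat 𝔽 m n) (ρ : ℝ) : Set (Mat 𝔽 m n) :=
  {A | mnorm (A - c) ≤ ρ}

/-- The distance `⟨x⟩` from `x ∈ ℒ^h` to the polynomial lattice `𝔽[X]^h`. -/
def latDist {h : ℕ} (x : Fin h → L 𝔽) : ℝ :=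
  sInf {r : ℝ | ∃ p : Fin h → L 𝔽, (∀ i, IsPoly (p i)) ∧ r = vnorm (fun i => x i - p i)}

/-- The set `𝔅(m,n)` of badly approximable systems of `m` linear forms in `n`
variables over `ℒ`. -/
def Bad (𝔽 : Type) [Field 𝔽] [Fintype 𝔽] (m n : ℕ) : Set (Mat 𝔽 m n) :=
  {A | ∃ K : ℝ, 0 < K ∧ ∀ q : Fin m → L 𝔽, (∀ i, IsPoly (q i)) → q ≠ 0 →
    latDist (Matrix.vecMul q A) ^ n > K / vnorm q ^ m}

/-- The Hausdorff `s`-measure of `E ⊆ ℒ^(mn)`, defined through countable covers by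
balls of radii `< δ`, letting `δ → 0` (the infimum over `δ`-covers is nonincreasing
in `δ`, so the limit is the supremum over `δ > 0`). -/
def hMeasure {m n : ℕ} (s : ℝ) (E : Set (Mat 𝔽 m n)) : ℝ≥0∞ :=
  ⨆ (δ : ℝ) (_ : 0 < δ),
    ⨅ (c : ℕ → Mat 𝔽 m n) (ρ : ℕ → ℝ) (_ : ∀ i, 0 < ρ i ∧ ρ i < δ)
      (_ : E ⊆ ⋃ i, mball (c i) (ρ i)), ∑' i, ENNReal.ofReal (ρ i ^ s)

/-- The Hausdorff dimension of `E ⊆ ℒ^(mn)`. -/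
def hdim {m n : ℕ} (E : Set (Mat 𝔽 m n)) : ℝ :=
  sInf {s : ℝ | 0 ≤ s ∧ hMeasure s E = 0}

/-! ### Schmidt `(α,β)`-games on `ℒ^(mn)` -/

/-- A formal ball: an element of `Ω = ℒ^(mn) × ℝ`. -/
structure FBall (𝔽 : Type) [Field 𝔽] (m n : ℕ) where
  /-- centre -/
  c : Mat 𝔽 m n
  /-- radius -/
  r : ℝ

/-- Formal inclusion of formal balls: `(c₁,ρ₁) ⊆ (c₂,ρ₂)` iff `ρ₁ + ‖c₁ - c₂‖_∞ ≤ ρ₂`. -/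
def FBall.ssub {m n : ℕ} (B₁ B₂ : FBall 𝔽 m n) : Prop :=
  B₁.r + mnorm (B₁.c - B₂.c) ≤ B₂.r

/-- The subset of `ℒ^(mn)` determined by a formal ball. -/
def FBall.toSet {m n : ℕ} (B : FBall 𝔽 m n) : Set (Mat 𝔽 m n) := mball B.c B.r

/-- A strategy for White: given the balls `B₁, …, B_{i+1}` chosen by Black so far,
produce White's next ball. -/
abbrev Strategy (𝔽 : Type) [Field 𝔽] (m n : ℕ) : Type :=
  (i : ℕ) → (Fin (i + 1) → FBall 𝔽 m n) → FBall 𝔽 m n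

/-- White's move at stage `i` when following strategy `str` against Black's balls `B`. -/
def wMove {m n : ℕ} (str : Strategy 𝔽 m n) (B : ℕ → FBall 𝔽 m n) (i : ℕ) : FBall 𝔽 m n :=
  str i fun j => B j.1

/-- Black's move `B_{j+2}` is legal (for parameter `β`): it is a formal subset of
White's ball `W_{j+1}` and has radius `β · ρ(W_{j+1})`. -/
def BlackOk {m n : ℕ} (β : ℝ) (str : Strategy 𝔽 m n) (B : ℕ → FBall 𝔽 m n) (j : ℕ) : Prop :=
  (B (j + 1)).ssub (wMove str B j) ∧ (B (j + 1)).r = β * (wMove str B j).r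

/-- White's move `W_{i+1}` is legal (for parameter `α`): it is a formal subset of
Black's ball `B_{i+1}` and has radius `α · ρ(B_{i+1})`. -/
def WhiteOk {m n : ℕ} (α : ℝ) (str : Strategy 𝔽 m n) (B : ℕ → FBall 𝔽 m n) (i : ℕ) : Prop :=
  (wMove str B i).ssub (B i) ∧ (wMove str B i).r = α * (B i).r

/-- `str` is a winning strategy for White in the `(α,β;S)`-game: against any
sequence of Black balls, White's moves are legal as long as Black has played
legally so far, and if the whole play is legal then the intersection of the
chosen balls is contained in `S`. -/
def WinningStrategy {m n : ℕ} (α β : ℝ) (S : Set (Mat 𝔽 m n)) (str : Strategy 𝔽 m n) : Prop :=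
  ∀ B : ℕ → FBall 𝔽 m n, 0 ≤ (B 0).r →
    (∀ i, (∀ j < i, BlackOk β str B j) → WhiteOk α str B i) ∧
    ((∀ j, BlackOk β str B j) → (⋂ i, (B i).toSet) ⊆ S)

/-- `S` is `(α,β)`-winning. -/
def IsWinningAB {m n : ℕ} (α β : ℝ) (S : Set (Mat 𝔽 m n)) : Prop :=
  ∃ str : Strategy 𝔽 m n, WinningStrategy α β S str

/-- `S` is `α`-winning. -/
def IsWinningA {m n : ℕ} (α : ℝ) (S : Set (Mat 𝔽 m n)) : Prop :=
  ∀ β : ℝ, 0 < β → β < 1 → IsWinningAB α β S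

/-- The winning dimension of `S` (a supremum of a set of reals, which is `0` by
convention when the set is empty). -/
def windim {m n : ℕ} (S : Set (Mat 𝔽 m n)) : ℝ :=
  sSup {α : ℝ | 0 < α ∧ α < 1 ∧ IsWinningA α S}

/-! ### The matrices `Ā`, `Ā^*` and the quantities `M_v`, `D_v`, `∇D_v` -/

/-- `Ā = [[A, I_m], [I_n, 0]]`. Rows are indexed by `Fin m ⊕ Fin n`
(coordinates `q_1, …, q_{m+n}`), columns by `Fin n ⊕ Fin m`. -/
def Abar {m n : ℕ} (A : Mat 𝔽 m n) : Matrix (Fin m ⊕ Fin n) (Fin n ⊕ Fin m) (L 𝔽) :=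
  Matrix.fromBlocks A 1 1 0

/-- `Ā^* = [[Aᵀ, I_n], [I_m, 0]]`. Rows are indexed by `Fin n ⊕ Fin m`,
columns by `Fin m ⊕ Fin n`. -/
def AbarStar {m n : ℕ} (A : Mat 𝔽 m n) : Matrix (Fin n ⊕ Fin m) (Fin m ⊕ Fin n) (L 𝔽) :=
  Matrix.fromBlocks A.transpose 1 1 0

/-- The standard bilinear form `x·y = Σ_i x_i y_i` on `ℒ^ι`. -/
def dotL {ι : Type*} [Fintype ι] (x y : ι → L 𝔽) : L 𝔽 := ∑ i, x i * y i

/-- Strictly increasing `v`-tuples `1 ≤ i_1 < ⋯ < i_v ≤ m`. -/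
def IncTuple (v m : ℕ) : Type := {f : Fin v → Fin m // StrictMono f}

/-- The vector `M_v(A) ∈ ℒ^(C(m,v)²)` of the determinants
`det (y_{i_r} · C_{j_s}(Ā^*))_{1 ≤ r,s ≤ v}` over all strictly increasing index
tuples.  (For `v = 0` every coordinate is an empty determinant, i.e. `1`.) -/
def MvVec {m n : ℕ} (y : Fin m → (Fin n ⊕ Fin m → L 𝔽)) (v : ℕ) (A : Mat 𝔽 m n) :
    IncTuple v m × IncTuple v m → L 𝔽 := fun p =>
  Matrix.det (Matrix.of fun r s : Fin v =>
    dotL (y (p.1.1 r)) fun t => AbarStar A t (Sum.inl (p.2.1 s)))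

/-- `‖M_v(A)‖_∞`. -/
def MvNorm {m n : ℕ} (y : Fin m → (Fin n ⊕ Fin m → L 𝔽)) (v : ℕ) (A : Mat 𝔽 m n) : ℝ :=
  vnorm (MvVec y v A)

/-- `M_v(K) = max_{A ∈ K} ‖M_v(A)‖_∞` for `K ⊆ ℒ^(mn)`. -/
def MvSet {m n : ℕ} (y : Fin m → (Fin n ⊕ Fin m → L 𝔽)) (v : ℕ) (K : Set (Mat 𝔽 m n)) : ℝ :=
  sSup {r : ℝ | ∃ A ∈ K, r = MvNorm y v A}

/-- `D_v(A) = det (y_h · C_l(Ā^*))_{1 ≤ h,l ≤ v}`. -/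
def Dv {m n : ℕ} (y : Fin m → (Fin n ⊕ Fin m → L 𝔽)) (v : ℕ) (hv : v ≤ m)
    (A : Mat 𝔽 m n) : L 𝔽 :=
  Matrix.det (Matrix.of fun h l : Fin v =>
    dotL (y (Fin.castLE hv h)) fun t => AbarStar A t (Sum.inl (Fin.castLE hv l)))

/-- The discrete gradient `∇D_v(A) ∈ ℒ^(mn)`, with coordinates
`D_v(A + E_{ij}) - D_v(A)`. -/
def gradDv {m n : ℕ} (y : Fin m → (Fin n ⊕ Fin m → L 𝔽)) (v : ℕ) (hv : v ≤ m)
    (A : Mat 𝔽 m n) : Fin m × Fin n → L 𝔽 := fun p =>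
  Dv y v hv (A + Matrix.single p.1 p.2 1) - Dv y v hv A

/-- `y_1, …, y_m ∈ ℒ^(m+n)` form an orthonormal system: `y_h · y_{h'} = δ_{h h'}`
and `‖t_1 y_1 + ⋯ + t_m y_m‖_∞ = max_h ‖t_h‖`. -/
def OrthoSystem {m n : ℕ} (y : Fin m → (Fin n ⊕ Fin m → L 𝔽)) : Prop :=
  (∀ h h', dotL (y h) (y h') = if h = h' then 1 else 0) ∧
  (∀ t : Fin m → L 𝔽, vnorm (fun r => ∑ h, t h * y h r) = ⨆ h, lnorm (t h))

/-! ### Distance functions, parallelepipeds and successive minima -/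

/-- The `j`-th successive minimum of a distance function `F` on `ℒ^N`: the infimum
of all `λ > 0` such that `{F < λ}` contains `j` linearly independent points of
`𝔽[X]^N`. -/
def succMin {N : ℕ} (F : (Fin N → L 𝔽) → ℝ) (j : ℕ) : ℝ :=
  sInf {lam : ℝ | 0 < lam ∧ ∃ v : Fin j → (Fin N → L 𝔽),
    (∀ r, ∀ i, IsPoly (v r i)) ∧ LinearIndependent (L 𝔽) v ∧ ∀ r, F (v r) < lam}

/-- The distance function `F_A(x) = max_j c_j⁻¹ ‖Σ_i x_i a_{ij}‖`. -/
def FA {N : ℕ} (A : Matrix (Fin N) (Fin N) (L 𝔽)) (c : Fin N → ℝ)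
    (x : Fin N → L 𝔽) : ℝ :=
  ⨆ j, (c j)⁻¹ * lnorm (∑ i, x i * A i j)

/-- The parallelepiped `P_A(λ) = {x ∈ ℒ^N : F_A(x) < λ}`. -/
def PA {N : ℕ} (A : Matrix (Fin N) (Fin N) (L 𝔽)) (c : Fin N → ℝ) (lam : ℝ) :
    Set (Fin N → L 𝔽) := {x | FA A c x < lam}

/-- The polar distance function `F_A^*(y) = sup_{x ≠ 0} ‖x·y‖ / F_A(x)`. -/
def FAstar {N : ℕ} (A : Matrix (Fin N) (Fin N) (L 𝔽)) (c : Fin N → ℝ)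
    (y : Fin N → L 𝔽) : ℝ :=
  ⨆ x : {x : Fin N → L 𝔽 // x ≠ 0}, lnorm (dotL x.1 y) / FA A c x.1

/-! ### Haar measure, characterized by translation invariance and normalization -/

/-- The Borel σ-algebra on `ℒ^N`, generated by the balls. -/
def vecSigma (𝔽 : Type) [Field 𝔽] [Fintype 𝔽] (N : ℕ) : MeasurableSpace (Fin N → L 𝔽) :=
  MeasurableSpace.generateFrom {s | ∃ c ρ, (0 : ℝ) < ρ ∧ s = vball c ρ}

/-- `μ` is the Haar measure on `ℒ^N`: translation invariant and normalized so that
the unit ball `I^N` has measure `1` (these properties determine it uniquely). -/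
def IsHaarVec {N : ℕ} (μ : @Measure (Fin N → L 𝔽) (vecSigma 𝔽 N)) : Prop :=
  (∀ (v : Fin N → L 𝔽) (s : Set (Fin N → L 𝔽)), μ ((fun x => x + v) ⁻¹' s) = μ s) ∧
  μ {x | ∀ i, lnorm (x i) < 1} = 1

/-- The Borel σ-algebra on `ℒ^(mn)`, generated by the balls. -/
def matSigma (𝔽 : Type) [Field 𝔽] [Fintype 𝔽] (m n : ℕ) : MeasurableSpace (Mat 𝔽 m n) :=
  MeasurableSpace.generateFrom {s | ∃ c ρ, (0 : ℝ) < ρ ∧ s = mball c ρ}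

/-- `μ` is the Haar measure on `ℒ^(mn)`: translation invariant and normalized so
that the unit ball `I^(mn)` has measure `1`. -/
def IsHaarMat {m n : ℕ} (μ : @Measure (Mat 𝔽 m n) (matSigma 𝔽 m n)) : Prop :=
  (∀ (v : Mat 𝔽 m n) (s : Set (Mat 𝔽 m n)), μ ((fun x => x + v) ⁻¹' s) = μ s) ∧
  μ {A | ∀ i j, lnorm (A i j) < 1} = 1

/-! ### The constants of Section 3 -/

/-- `τ = m/(m+n)`. -/
def tau (m n : ℕ) : ℝ := m / (m + n)

/-- `δ = R^(-m(m+n)²)`. -/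
def del (R : ℝ) (m n : ℕ) : ℝ := R ^ (-((m : ℝ) * ((m : ℝ) + n) ^ 2))

/-- `δ* = R^(-n(m+n)²)`. -/
def delStar (R : ℝ) (m n : ℕ) : ℝ := R ^ (-((n : ℝ) * ((m : ℝ) + n) ^ 2))

/-!
Only the lower bound needs an idea: the space is a countable union of bounded pieces, and
truncating the series at `T ^ N` covers each of them by `O(k ^ (m n N))` balls of radius
`k ^ (-N)`.

The digits (coefficients of `X⁻¹, X⁻², …`) of `q A` depend linearly on `q`, through a block Hankel
matrix formed of the digits of `A`. Call `A` good at stage `u` if no `q ≠ 0` of degree `< n u`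
kills the first `m u + c` digits of `q A`; being good at all stages `u ∈ t ℕ` implies being badly
approximable. If the first `(m + n) u + c` digits of `A` are good at stage `u`, consider the
continuations by `M = (m + n) t` further digits that are not good at stage `u + t`. Each of them
has an offending `q`, of degree `n u + j` with `0 ≤ j < n t`. For fixed `q` the offending
continuations are counted by surjectivity of a linear map; the number of candidates `q` is
governed by the kernel of a block Hankel matrix, hence by that of its transpose, which has
dimension at most `n c` and is trivial for `j ≥ n c`. The resulting geometric sums show that at
least half of the `k ^ (m n M)` continuations are good.

So the good digit sequences form a tree with at least `k ^ (m n M - 1)` children at each node.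
Given a cover of small `s`-weight, transfer the weights of the balls to the digit sequences of
their centres, and descend to the lightest child at every node: if `k ^ (M s) ≤ k ^ (m n M - 1)`,
the resulting branch is not covered. As `t → ∞` this reaches every `s < m n`.
-/

open Polynomial
open scoped Finset

section Splice

variable {α : Type*} {M : ℕ}

/-- The sequence `a` with its letters at the positions `N, …, N + M - 1` replaced by `b`. -/
def splice (a : ℕ → α) (N : ℕ) (b : Fin M → α) : ℕ → α :=
  Function.extend (fun p : Fin M => N + p) b a

theorem splice_add (a : ℕ → α) (N : ℕ) (b : Fin M → α) (p : Fin M) :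
    splice a N b (N + p) = b p :=
  Function.Injective.extend_apply (fun _ _ h => Fin.ext (Nat.add_left_cancel h)) b a p

theorem splice_of_lt (a : ℕ → α) (b : Fin M → α) {N l : ℕ} (h : l < N) :
    splice a N b l = a l :=
  Function.extend_apply' _ _ _ fun ⟨_, _⟩ => by omega

theorem splice_mem_cylinder (a : ℕ → α) (N : ℕ) (b : Fin M → α) :
    splice a N b ∈ PiNat.cylinder a N :=
  fun _ hl => splice_of_lt a b hl

theorem disjoint_cylinder_splice (a : ℕ → α) (N : ℕ) {b b' : Fin M → α} (h : b ≠ b') :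
    Disjoint (PiNat.cylinder (splice a N b) (N + M)) (PiNat.cylinder (splice a N b') (N + M)) := by
  refine Set.disjoint_left.mpr fun x hx hx' => h (funext fun p => ?_)
  have hp : N + (p : ℕ) < N + M := by omega
  rw [← splice_add a N b, ← splice_add a N b', ← hx _ hp, hx' _ hp]

theorem splice_eq_add {V : Type*} [AddCommMonoid V] (a : ℕ → V) (N : ℕ) (b : Fin M → V) :
    splice a N b = splice a N (0 : Fin M → V) + splice 0 N b := by
  simp only [splice, ← Function.extend_add, zero_add, add_zero]

/-- The block `b` placed at the positions `N, …, N + M - 1` of the zero sequence. -/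
def spliceZero (F : Type*) {V : Type*} [Semiring F] [AddCommMonoid V] [Module F V] (N : ℕ) :
    (Fin M → V) →ₗ[F] ℕ → V where
  toFun := splice 0 N
  map_add' b b' := by
    rw [splice, splice, splice, ← Function.extend_add, add_zero]
  map_smul' r b := by
    rw [splice, splice, RingHom.id_apply, ← Function.extend_smul, smul_zero]

end Splice

section Digits

variable {F ι κ : Type*} [Field F] [Fintype ι]

/-- The coefficient of `X^(-(l + 1))` in the row vector `q A`, as a function of the polynomial
row vector `q` and of the digit matrices `a` of `A = ∑ j, a j X^(-(j + 1))`. -/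
def digit (l : ℕ) : (ℕ → ι → κ → F) →ₗ[F] (ι → F[X]) →ₗ[F] (κ → F) :=
  LinearMap.mk₂ F
    (fun a q => ∑ i, lsum (fun j => LinearMap.toSpanSingleton F (κ → F) (a (j + l) i)) (q i))
    (fun a a' q => by
      simp [lsum_apply, Polynomial.sum_def, ← Finset.sum_add_distrib])
    (fun r a q => by
      simp [lsum_apply, Polynomial.sum_def, Finset.smul_sum, smul_comm r])
    (fun a q q' => by simp only [Pi.add_apply, map_add, Finset.sum_add_distrib])
    (fun r a q => by simp [Finset.smul_sum])

theorem digit_apply (l : ℕ) (a : ℕ → ι → κ → F) (q : ι → F[X]) :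
    digit l a q = ∑ i, (q i).sum fun j c => c • a (j + l) i := rfl

theorem mem_degreeLT_iff_coeff_eq_zero {R : Type*} [Semiring R] {r : ℕ} {p : R[X]} :
    p ∈ degreeLT R r ↔ ∀ j, r ≤ j → p.coeff j = 0 :=
  mem_degreeLT.trans (degree_lt_iff_coeff_zero p r)

theorem exists_degreeLT_succ_coeff_ne_zero {F ι : Type*} [Field F] [Finite ι]
    {q : ι → F[X]} (hq : q ≠ 0) :
    ∃ d, (∀ i, q i ∈ degreeLT F (d + 1)) ∧ ∃ i, (q i).coeff d ≠ 0 := by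
  have := Fintype.ofFinite ι
  obtain ⟨i, hi⟩ := Function.ne_iff.mp hq
  obtain ⟨i₀, -, hi₀⟩ := Finset.exists_max_image Finset.univ (fun i => (q i).degree)
    ⟨i, Finset.mem_univ i⟩
  have hne : q i₀ ≠ 0 := fun h => hi (by simpa [h] using hi₀ i (Finset.mem_univ i))
  refine ⟨(q i₀).natDegree, fun i => mem_degreeLT.mpr ?_, i₀, leadingCoeff_ne_zero.mpr hne⟩
  calc (q i).degree ≤ (q i₀).natDegree :=
        (hi₀ i (Finset.mem_univ i)).trans_eq (degree_eq_natDegree hne)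
    _ < ((q i₀).natDegree + 1 : ℕ) := by exact_mod_cast Nat.lt_succ_self _

theorem digit_eq_sum_range {r : ℕ} {q : ι → F[X]} (hq : ∀ i, q i ∈ degreeLT F r) (l : ℕ)
    (a : ℕ → ι → κ → F) :
    digit l a q = ∑ i, ∑ j ∈ Finset.range r, (q i).coeff j • a (j + l) i := by
  refine Finset.sum_congr rfl fun i _ =>
    (q i).sum_eq_of_subset (fun _ c => c • _) (fun _ => zero_smul _ _) fun j hj => ?_
  contrapose! hj
  rw [notMem_support_iff]
  exact mem_degreeLT_iff_coeff_eq_zero.mp (hq i) j (by simpa using hj)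

theorem digit_congr {r l : ℕ} {q : ι → F[X]} (hq : ∀ i, q i ∈ degreeLT F r)
    {a b : ℕ → ι → κ → F} (hab : ∀ j < r + l, a j = b j) : digit l a q = digit l b q := by
  rw [digit_eq_sum_range hq, digit_eq_sum_range hq]
  refine Finset.sum_congr rfl fun i _ => Finset.sum_congr rfl fun j hj => ?_
  rw [hab _ (Nat.add_lt_add_right (Finset.mem_range.mp hj) l)]

theorem digit_X_pow_smul (l e : ℕ) (a : ℕ → ι → κ → F) (q : ι → F[X]) :
    digit l a ((X : F[X]) ^ e • q) = digit (l + e) a q := by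
  refine Finset.sum_congr rfl fun i _ => ?_
  suffices h : lsum (fun j => LinearMap.toSpanSingleton F (κ → F) (a (j + l) i)) ∘ₗ
      LinearMap.mulLeft F (X ^ e) = lsum fun j => LinearMap.toSpanSingleton F _ (a (j + (l + e)) i)
    from LinearMap.congr_fun h (q i)
  ext j : 2
  simp [lsum_apply, X_pow_mul_monomial, sum_monomial_index, add_comm l, add_assoc]

theorem digit_smul (l : ℕ) (a : ℕ → ι → κ → F) (p : F[X]) (q : ι → F[X]) :
    digit l a (p • q) = p.sum fun e c => c • digit (l + e) a q := by
  conv_lhs => rw [p.as_sum_support_C_mul_X_pow, Finset.sum_smul, map_sum]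
  refine Finset.sum_congr rfl fun e _ => ?_
  dsimp only
  rw [mul_smul, ← digit_X_pow_smul, ← map_smul]
  congr 1
  ext1 i
  simp [Polynomial.smul_eq_C_mul]

end Digits

section PolyVec

variable {F ι : Type*} [Field F]

/-- The polynomial vector with prescribed coefficients of `X^0, …, X^(r - 1)`. -/
def polyVec (r : ℕ) : (Fin r × ι → F) →ₗ[F] (ι → F[X]) :=
  LinearMap.pi fun i => ∑ j : Fin r, monomial (j : ℕ) ∘ₗ LinearMap.proj (j, i)

theorem coeff_polyVec {r : ℕ} (v : Fin r × ι → F) (i : ι) (j : Fin r) :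
    (polyVec r v i).coeff j = v (j, i) := by
  simp [polyVec, coeff_monomial, Fin.val_inj]

theorem polyVec_mem_degreeLT {r : ℕ} (v : Fin r × ι → F) (i : ι) :
    polyVec r v i ∈ degreeLT F r := by
  simp only [polyVec, LinearMap.pi_apply, LinearMap.sum_apply]
  exact Submodule.sum_mem _ fun j _ => monomial_coe_mem_degreeLT j _

theorem polyVec_injective (r : ℕ) : Function.Injective (polyVec (F := F) (ι := ι) r) :=
  fun v w h => funext fun ⟨j, i⟩ => by rw [← coeff_polyVec v, h, coeff_polyVec]

theorem polyVec_coeff {r : ℕ} {q : ι → F[X]} (hq : ∀ i, q i ∈ degreeLT F r) :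
    polyVec r (fun p => (q p.2).coeff p.1) = q := by
  refine funext fun i => Polynomial.ext fun j => ?_
  by_cases hj : j < r
  · exact coeff_polyVec (fun p => (q p.2).coeff p.1) i ⟨j, hj⟩
  · rw [mem_degreeLT_iff_coeff_eq_zero.mp (polyVec_mem_degreeLT _ i) j (not_lt.mp hj),
      mem_degreeLT_iff_coeff_eq_zero.mp (hq i) j (not_lt.mp hj)]

end PolyVec

section BlockHankel

variable {α ι κ : Type*}

/-- The block Hankel matrix with `r × s` blocks `a (j + l)`. -/
def blockHankel (a : ℕ → ι → κ → α) (r s : ℕ) : Matrix (Fin r × ι) (Fin s × κ) α :=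
  Matrix.of fun p p' => a (p.1 + p'.1) p.2 p'.2

theorem blockHankel_transpose (a : ℕ → ι → κ → α) (r s : ℕ) :
    (blockHankel a r s).transpose = blockHankel (fun l => Function.swap (a l)) s r := by
  ext p p'
  simp [blockHankel, Function.swap, add_comm]

end BlockHankel

section Hankel

variable {F ι κ : Type*} [Field F] [Fintype ι]

/-- The left kernel of the block Hankel matrix with `r × s` blocks `a (j + l)`, as a space of
polynomial row vectors: those `q` of degrees `< r` such that the first `s` digits of `q A`
vanish. -/
def hankelKer (a : ℕ → ι → κ → F) (r s : ℕ) : Submodule F (ι → F[X]) :=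
  Submodule.pi Set.univ (fun _ => degreeLT F r) ⊓ ⨅ l ∈ Set.Iio s, LinearMap.ker (digit l a)

theorem mem_hankelKer {a : ℕ → ι → κ → F} {r s : ℕ} {q : ι → F[X]} :
    q ∈ hankelKer a r s ↔ (∀ i, q i ∈ degreeLT F r) ∧ ∀ l < s, digit l a q = 0 := by
  simp [hankelKer, Submodule.mem_pi]

theorem hankelKer_mono (a : ℕ → ι → κ → F) {r r' s s' : ℕ} (hr : r ≤ r') (hs : s' ≤ s) :
    hankelKer a r s ≤ hankelKer a r' s' := fun q hq => by
  rw [mem_hankelKer] at hq ⊢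
  exact ⟨fun i => degreeLT_mono hr (hq.1 i), fun l hl => hq.2 l (hl.trans_le hs)⟩

theorem hankelKer_zero_left (a : ℕ → ι → κ → F) (s : ℕ) : hankelKer a 0 s = ⊥ := by
  refine (Submodule.eq_bot_iff _).mpr fun q hq => funext fun i => ?_
  simpa [mem_degreeLT] using (mem_hankelKer.mp hq).1 i

theorem hankelKer_congr {a b : ℕ → ι → κ → F} {r s : ℕ} (hab : ∀ l < r + s, a l = b l) :
    hankelKer a r s = hankelKer b r s := by
  ext q
  simp only [mem_hankelKer]
  refine and_congr_right fun hq => forall₂_congr fun l hl => ?_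
  rw [digit_congr hq fun j hj => hab j (by omega)]

theorem vecMul_blockHankel (a : ℕ → ι → κ → F) {r s : ℕ} (v : Fin r × ι → F) (l : Fin s)
    (ν : κ) : Matrix.vecMul v (blockHankel a r s) (l, ν) = digit l a (polyVec r v) ν := by
  rw [digit_eq_sum_range (polyVec_mem_degreeLT v)]
  simp only [Matrix.vecMul, dotProduct, Fintype.sum_prod_type_right, blockHankel,
    Finset.sum_range, coeff_polyVec, Finset.sum_apply, Pi.smul_apply, Matrix.of_apply, smul_eq_mul]

theorem hankelKer_eq_map (a : ℕ → ι → κ → F) (r s : ℕ) :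
    hankelKer a r s = (LinearMap.ker (blockHankel a r s).vecMulLinear).map (polyVec r) := by
  have mem_iff (v : Fin r × ι → F) :
      polyVec r v ∈ hankelKer a r s ↔ v ∈ LinearMap.ker (blockHankel a r s).vecMulLinear := by
    simp only [mem_hankelKer, polyVec_mem_degreeLT, implies_true, true_and, LinearMap.mem_ker,
      funext_iff, Prod.forall, Matrix.vecMulLinear_apply, vecMul_blockHankel, Pi.zero_apply,
      Fin.forall_iff]
  ext q
  constructor
  · intro hq
    have hpoly := polyVec_coeff (mem_hankelKer.mp hq).1
    exact ⟨_, (mem_iff _).mp (hpoly.symm ▸ hq), hpoly⟩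
  · rintro ⟨v, hv, rfl⟩
    exact (mem_iff v).mpr hv

instance finite_hankelKer (a : ℕ → ι → κ → F) (r s : ℕ) : Module.Finite F (hankelKer a r s) := by
  rw [hankelKer_eq_map]
  infer_instance

theorem finrank_hankelKer_add_rank [Fintype κ] (a : ℕ → ι → κ → F) (r s : ℕ) :
    Module.finrank F (hankelKer a r s) + (blockHankel a r s).rank = r * Fintype.card ι := by
  rw [hankelKer_eq_map, ← (Submodule.equivMapOfInjective _ (polyVec_injective r) _).finrank_eq,
    ← Matrix.rank_transpose, Matrix.rank, Matrix.mulVecLin_transpose, add_comm,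
    LinearMap.finrank_range_add_finrank_ker]
  simp

theorem finrank_hankelKer_add [Fintype κ] (a : ℕ → ι → κ → F) (r s : ℕ) :
    Module.finrank F (hankelKer a r s) + s * Fintype.card κ =
      Module.finrank F (hankelKer (fun l => Function.swap (a l)) s r) +
        r * Fintype.card ι := by
  rw [← finrank_hankelKer_add_rank a r s,
    ← finrank_hankelKer_add_rank (fun l => Function.swap (a l)) s r, ← blockHankel_transpose,
    Matrix.rank_transpose]
  ring

theorem smul_mem_hankelKer {a : ℕ → ι → κ → F} {r s i : ℕ} {p : F[X]} {q : ι → F[X]}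
    (hp : p ∈ degreeLT F (i + 1)) (hq : q ∈ hankelKer a r (s + i)) :
    p • q ∈ hankelKer a (r + i) s := by
  rw [mem_hankelKer] at hq ⊢
  refine ⟨fun ν => ?_, fun l hl => ?_⟩
  · simp only [mem_degreeLT_iff_coeff_eq_zero] at hp hq ⊢
    intro j hj
    rw [Pi.smul_apply, smul_eq_mul, coeff_mul]
    refine Finset.sum_eq_zero fun x hx => ?_
    have hx := Finset.HasAntidiagonal.mem_antidiagonal.mp hx
    rcases lt_or_ge i x.1 with hi | hi
    · rw [hp _ hi, zero_mul]
    · rw [hq.1 ν x.2 (by omega), mul_zero]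
  · rw [digit_smul]
    refine Finset.sum_eq_zero fun e he => ?_
    have hei : e < i + 1 := by
      by_contra! h
      exact mem_support_iff.mp he (mem_degreeLT_iff_coeff_eq_zero.mp hp e h)
    exact smul_eq_zero_of_right _ (hq.2 (l + e) (by omega))

theorem lt_finrank_hankelKer (a : ℕ → ι → κ → F) {r s i : ℕ} (h : hankelKer a r (s + i) ≠ ⊥) :
    i < Module.finrank F (hankelKer a (r + i) s) := by
  obtain ⟨q, hq, hq0⟩ := Submodule.exists_mem_ne_zero_of_ne_bot h
  let f : degreeLT F (i + 1) →ₗ[F] hankelKer a (r + i) s :=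
    ((LinearMap.toSpanSingleton F[X] _ q).restrictScalars F).restrict
      fun _ hp => smul_mem_hankelKer hp hq
  have hf : Function.Injective f := fun p p' hpp' =>
    Subtype.ext (smul_left_injective F[X] hq0 (congrArg Subtype.val hpp'))
  have := LinearMap.finrank_le_finrank_of_injective hf
  rwa [(degreeLTEquiv F (i + 1)).finrank_eq, Module.finrank_fin_fun] at this

end Hankel

section Counting

variable {F : Type*} [Field F]

/- Only the unknowns `v 0, …, v l` occur in the `l`-th equation, the last of them with the
coefficient `c d`. -/
theorem exists_sum_smul_splice_eq {V : Type*} [AddCommGroup V] [Module F V]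
    [FiniteDimensional F V] {c : ℕ → F} {d : ℕ} (hc : c d ≠ 0) (lo : ℕ) {e : ℕ} (y : Fin e → V) :
    ∃ v : Fin e → V, ∀ l : Fin e,
      ∑ j ∈ Finset.range (d + 1), c j • splice 0 (d + lo) v (j + (lo + l)) = y l := by
  let f : (Fin e → V) →ₗ[F] Fin e → V := LinearMap.pi fun l =>
    ∑ j ∈ Finset.range (d + 1), c j • LinearMap.proj (j + (lo + l)) ∘ₗ spliceZero F (d + lo)
  have f_apply (v : Fin e → V) (l : Fin e) : f v l =
      ∑ j ∈ Finset.range (d + 1), c j • splice 0 (d + lo) v (j + (lo + l)) := by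
    simp [f, spliceZero]
  suffices hf : Function.Injective f by
    obtain ⟨v, hv⟩ := (LinearMap.injective_iff_surjective.mp hf) y
    exact ⟨v, fun l => by rw [← f_apply, hv]⟩
  refine (injective_iff_map_eq_zero f).mpr fun v hv => funext fun l => ?_
  induction l using WellFoundedLT.induction with
  | ind l ih =>
    have hl : f v l = 0 := congrFun hv l
    rw [f_apply, Finset.sum_range_succ, Finset.sum_eq_zero, zero_add,
      ← add_assoc, splice_add] at hl
    · exact (smul_eq_zero.mp hl).resolve_left hc
    · intro j hj
      have hjd := Finset.mem_range.mp hj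
      refine smul_eq_zero_of_right _ ?_
      rcases lt_or_ge (j + (lo + l)) (d + lo) with h | h
      · exact splice_of_lt 0 v h
      · obtain ⟨p, hp⟩ := Nat.exists_eq_add_of_le h
        rw [hp]
        exact (splice_add 0 _ v ⟨p, by omega⟩).trans (ih ⟨p, by omega⟩ (Fin.lt_def.mpr (by grind)))

theorem card_fiber_mul_card {V W : Type*} [AddGroup V] [AddGroup W] [Fintype V] [Fintype W]
    [DecidableEq W] {f : V →+ W} (hf : Function.Surjective f) (w : W) :
    #{v | f v = w} * Fintype.card W = Fintype.card V := by
  symm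
  calc Fintype.card V = ∑ w', #{v | f v = w'} :=
        Finset.card_eq_sum_card_fiberwise (s := Finset.univ) fun _ _ => Finset.mem_univ _
    _ = ∑ _ : W, #{v | f v = w} := Finset.sum_congr rfl fun w' _ =>
        AddMonoidHom.card_fiber_eq_of_mem_range f (hf w') (hf w)
    _ = #{v | f v = w} * Fintype.card W := by
        rw [Finset.sum_const, Finset.card_univ, smul_eq_mul, mul_comm]

variable {ι κ : Type*} [Fintype ι]

/-- The digits `lo, …, lo + e - 1` of `q A` as a function of the digits `N, …, N + M - 1` of `A`,
the remaining digits of `A` being zero. -/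
def blockDigits (q : ι → F[X]) (N M lo e : ℕ) :
    (Fin M → ι → κ → F) →ₗ[F] Fin e → κ → F :=
  LinearMap.pi fun l => (digit (lo + l)).flip q ∘ₗ spliceZero F N

theorem blockDigits_apply (q : ι → F[X]) (N lo : ℕ) {M e : ℕ} (b : Fin M → ι → κ → F)
    (l : Fin e) : blockDigits q N M lo e b l = digit (lo + l) (splice 0 N b) q := rfl

theorem surjective_blockDigits [Finite κ] {q : ι → F[X]} {N M lo e d : ℕ}
    (hq : ∀ i, q i ∈ degreeLT F (d + 1)) (hd : ∃ i, (q i).coeff d ≠ 0) (hlo : N ≤ d + lo)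
    (hhi : d + lo + e ≤ N + M) :
    Function.Surjective (blockDigits (κ := κ) q N M lo e) := by
  intro y
  obtain ⟨i, hi⟩ := hd
  obtain ⟨v, hv⟩ := exists_sum_smul_splice_eq hi lo y
  let a : ℕ → ι → κ → F := fun l => Pi.single i (splice 0 (d + lo) v l)
  refine ⟨fun p => a (N + p), funext fun l => ?_⟩
  have hsplice : ∀ j < d + 1 + (lo + l), splice 0 N (fun p : Fin M => a (N + p)) j = a j := by
    intro j hj
    rcases lt_or_ge j N with h | h
    · rw [splice_of_lt _ _ h, Pi.zero_apply]
      simp only [a, splice_of_lt 0 v (h.trans_le hlo), Pi.zero_apply, Pi.single_zero]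
    · obtain ⟨p, rfl⟩ := Nat.exists_eq_add_of_le h
      exact splice_add 0 N (fun p : Fin M => a (N + p)) ⟨p, by omega⟩
  rw [blockDigits_apply, digit_congr hq hsplice, digit_eq_sum_range hq, ← hv l,
    Finset.sum_eq_single_of_mem i (Finset.mem_univ i)]
  · simp only [a, Pi.single_eq_same]
  · intro i' _ hi'
    simp only [a, Pi.single_eq_of_ne hi', smul_zero, Finset.sum_const_zero]

variable [Fintype κ] [Fintype F]

theorem card_blocks (F ι κ : Type*) [Fintype F] [Fintype ι] [Fintype κ] (M : ℕ) :
    Fintype.card (Fin M → ι → κ → F) =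
      Fintype.card F ^ (Fintype.card ι * Fintype.card κ * M) := by
  rw [Fintype.card_pi_const, Fintype.card_fun, Fintype.card_fun]
  ring

theorem card_splice_digits_eq_zero_mul (a : ℕ → ι → κ → F) {q : ι → F[X]} {N M lo e d : ℕ}
    (hq : ∀ i, q i ∈ degreeLT F (d + 1)) (hd : ∃ i, (q i).coeff d ≠ 0) (hlo : N ≤ d + lo)
    (hhi : d + lo + e ≤ N + M) :
    #{b : Fin M → ι → κ → F | ∀ l < e, digit (lo + l) (splice a N b) q = 0} *
        Fintype.card F ^ (Fintype.card κ * e) =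
      Fintype.card F ^ (Fintype.card ι * Fintype.card κ * M) := by
  have hfiber := card_fiber_mul_card (f := (blockDigits (κ := κ) q N M lo e).toAddMonoidHom)
    (surjective_blockDigits hq hd hlo hhi)
    fun l => -digit (lo + l) (splice a N (0 : Fin M → ι → κ → F)) q
  rw [card_blocks, Fintype.card_pi_const, Fintype.card_fun, ← pow_mul] at hfiber
  convert hfiber using 3
  · ext b
    rw [Finset.mem_filter_univ, Finset.mem_filter_univ, funext_iff, Fin.forall_iff]
    refine forall₂_congr fun l hl => ?_
    rw [splice_eq_add a N b, map_add, LinearMap.add_apply, add_comm, ← eq_neg_iff_add_eq_zero]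
    rfl

theorem card_exists_splice_digits_eq_zero_mul_le (a : ℕ → ι → κ → F) {N M lo e d : ℕ}
    (hlo : N ≤ d + lo) (hhi : d + lo + e ≤ N + M) :
    #{b : Fin M → ι → κ → F | ∃ q ∈ hankelKer a (d + 1) lo, (∃ i, (q i).coeff d ≠ 0) ∧
        ∀ l < e, digit (lo + l) (splice a N b) q = 0} *
        Fintype.card F ^ (Fintype.card κ * (lo + e)) ≤
      Fintype.card F ^ (Module.finrank F (hankelKer (fun l => Function.swap (a l)) lo (d + 1)) +
        (d + 1) * Fintype.card ι) * Fintype.card F ^ (Fintype.card ι * Fintype.card κ * M) := by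
  set k := Fintype.card F
  set K := hankelKer a (d + 1) lo
  have : Finite K := Module.finite_of_finite F
  have : Fintype K := Fintype.ofFinite K
  have hK : Fintype.card K = k ^ Module.finrank F K := Module.card_eq_pow_finrank
  let vanishing (q : ι → F[X]) : Finset (Fin M → ι → κ → F) :=
    {b | ∀ l < e, digit (lo + l) (splice a N b) q = 0}
  let leading : Finset K := {q | ∃ i, (q.1 i).coeff d ≠ 0}
  calc _ ≤ #(leading.biUnion fun q => vanishing q) * k ^ (Fintype.card κ * (lo + e)) := by
        gcongr
        intro b hb
        obtain ⟨q, hq, hqd, hqb⟩ := (Finset.mem_filter_univ _).mp hb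
        exact Finset.mem_biUnion.mpr ⟨⟨q, hq⟩, by simpa [leading] using hqd,
          by simpa [vanishing] using hqb⟩
    _ ≤ (∑ q ∈ leading, #(vanishing q)) * k ^ (Fintype.card κ * (lo + e)) := by
        gcongr
        exact Finset.card_biUnion_le
    _ = (∑ q ∈ leading, #(vanishing q) * k ^ (Fintype.card κ * e)) *
          k ^ (lo * Fintype.card κ) := by
        rw [← Finset.sum_mul]
        ring
    _ = #leading * k ^ (Fintype.card ι * Fintype.card κ * M) * k ^ (lo * Fintype.card κ) := by
        rw [← smul_eq_mul #leading, ← Finset.sum_const]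
        congr 1
        refine Finset.sum_congr rfl fun q hq => ?_
        exact card_splice_digits_eq_zero_mul a (mem_hankelKer.mp q.2).1
          (by simpa [leading] using hq) hlo hhi
    _ ≤ k ^ Module.finrank F K * k ^ (Fintype.card ι * Fintype.card κ * M) *
          k ^ (lo * Fintype.card κ) := by
        rw [← hK]
        gcongr
        exact Finset.card_le_univ _
    _ = _ := by
        rw [← finrank_hankelKer_add a (d + 1) lo]
        ring

end Counting

theorem sum_range_pow_succ_le {b : ℕ} (hb : 2 ≤ b) (N : ℕ) :
    ∑ j ∈ Finset.range N, b ^ (j + 1) ≤ 2 * b ^ N := by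
  induction N with
  | zero => simp
  | succ N ih =>
    rw [Finset.sum_range_succ, pow_succ]
    nlinarith [Nat.mul_le_mul_left (b ^ N) hb]

theorem two_mul_sum_pow_add_le {k m n c t : ℕ} (hk : 2 ≤ k) (hm : 0 < m) (hn : 0 < n) (hc : 3 ≤ c)
    (ht : c + 3 ≤ t) {w : ℕ → ℕ} (hw : ∀ j, w j ≤ n * c) (hw0 : ∀ j, n * c ≤ j → w j = 0) :
    2 * ∑ j ∈ Finset.range (n * t), k ^ (m * (j + 1) + w j) ≤ k ^ (m * (n * t) + n * c) := by
  have hkm : 2 ≤ k ^ m := hk.trans (Nat.le_self_pow hm.ne' k)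
  have geom (N : ℕ) : ∑ j ∈ Finset.range N, k ^ (m * (j + 1)) ≤ 2 * k ^ (m * N) := by
    simpa only [← pow_mul] using sum_range_pow_succ_le hkm N
  have hterm (j : ℕ) : k ^ (m * (j + 1) + w j) ≤
      k ^ (m * (j + 1)) + if j < n * c then k ^ (m * (j + 1)) * k ^ (n * c) else 0 := by
    split_ifs with hj
    · rw [pow_add]
      exact le_add_left (Nat.mul_le_mul_left _ (Nat.pow_le_pow_right (by omega) (hw j)))
    · rw [hw0 j (not_lt.mp hj), add_zero, add_zero]
  have hsum : ∑ j ∈ Finset.range (n * t), k ^ (m * (j + 1) + w j) ≤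
      2 * k ^ (m * (n * t)) + 2 * k ^ (m * (n * c)) * k ^ (n * c) := by
    have hfilter : {j ∈ Finset.range (n * t) | j < n * c} = Finset.range (n * c) := by
      ext j
      have := Nat.mul_le_mul_left n (show c ≤ t by omega)
      simp only [Finset.mem_filter, Finset.mem_range]
      omega
    refine (Finset.sum_le_sum fun j _ => hterm j).trans ?_
    rw [Finset.sum_add_distrib, ← Finset.sum_filter, hfilter, ← Finset.sum_mul]
    exact add_le_add (geom _) (Nat.mul_le_mul_right _ (geom _))
  have eight_le {e : ℕ} (he : 3 ≤ e) : 8 ≤ k ^ e :=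
    (Nat.pow_le_pow_left hk 3).trans (Nat.pow_le_pow_right (by omega) he)
  have hsmall : 8 * k ^ (m * (n * c)) ≤ k ^ (m * (n * t)) := by
    obtain ⟨e, rfl⟩ := Nat.exists_eq_add_of_le ht
    have he : 3 ≤ m * (n * (3 + e)) := by nlinarith [Nat.mul_pos hm hn]
    rw [show m * (n * (c + 3 + e)) = m * (n * (3 + e)) + m * (n * c) by ring, pow_add]
    exact Nat.mul_le_mul_right _ (eight_le he)
  have hlarge : 8 ≤ k ^ (n * c) := eight_le (by nlinarith)
  rw [pow_add]
  nlinarith [Nat.mul_le_mul_right (k ^ (n * c)) hsmall,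
    Nat.mul_le_mul_left (k ^ (m * (n * t))) hlarge]

section Good

variable {F ι κ : Type*} [Field F] [Fintype ι] [Fintype κ] {c u t : ℕ}
  {a : ℕ → ι → κ → F}

local notation "m" => Fintype.card ι
local notation "n" => Fintype.card κ

/-- The digit sequence `a` is good at stage `u` if no nonzero `q` of degree `< n u` has its first
`m u + c` digits of `q A` equal to zero, where `m = card ι` and `n = card κ`. This only concerns
the first `(m + n) u + c` digits of `A`. -/
def IsGood (c u : ℕ) (a : ℕ → ι → κ → F) : Prop :=
  hankelKer a (n * u) (m * u + c) = ⊥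

theorem isGood_zero (c : ℕ) (a : ℕ → ι → κ → F) : IsGood c 0 a := by
  rw [IsGood, mul_zero, hankelKer_zero_left]

theorem IsGood.congr (ha : IsGood c u a) {b : ℕ → ι → κ → F}
    (hab : ∀ l < (m + n) * u + c, a l = b l) : IsGood c u b := by
  rwa [IsGood, ← hankelKer_congr fun l hl => hab l (by rw [add_mul]; omega)]

theorem IsGood.finrank_transpose (ha : IsGood c u a) :
    Module.finrank F (hankelKer (fun l => Function.swap (a l)) (m * u + c)
      (n * u)) = n * c := by
  have h := finrank_hankelKer_add a (n * u) (m * u + c)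
  rw [show hankelKer a _ _ = ⊥ from ha, finrank_bot] at h
  linarith

/-- The dimension of the left kernel that controls the vectors `q` of exact degree `n u + j`. -/
def kerDim (c u : ℕ) (a : ℕ → ι → κ → F) (j : ℕ) : ℕ :=
  Module.finrank F (hankelKer (fun l => Function.swap (a l)) (m * u + c - j)
    (n * u + j + 1))

theorem IsGood.kerDim_le (ha : IsGood c u a) (j : ℕ) : kerDim c u a j ≤ n * c :=
  (Submodule.finrank_mono (hankelKer_mono _ (Nat.sub_le _ _) (by omega))).trans_eq
    ha.finrank_transpose

theorem IsGood.kerDim_eq_zero (ha : IsGood c u a) {j : ℕ} (hj : n * c ≤ j) :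
    kerDim c u a j = 0 := by
  refine Submodule.finrank_eq_zero.mpr ?_
  rcases le_total j (m * u + c) with hju | hju
  · by_contra hne
    have hker := lt_finrank_hankelKer (fun l => Function.swap (a l)) (ne_bot_of_le_ne_bot hne
      (hankelKer_mono _ le_rfl (Nat.le_succ (n * u + j))))
    rw [Nat.sub_add_cancel hju, ha.finrank_transpose] at hker
    omega
  · rw [Nat.sub_eq_zero_of_le hju, hankelKer_zero_left]

theorem IsGood.exists_digit_eq_zero_of_not_isGood (ha : IsGood c u a)
    {b : Fin ((m + n) * t) → ι → κ → F}
    (hb : ¬ IsGood c (u + t) (splice a ((m + n) * u + c) b)) :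
    ∃ j < n * t, ∃ q ∈ hankelKer a (n * u + j + 1) (m * u + c - j),
      (∃ i, (q i).coeff (n * u + j) ≠ 0) ∧
        ∀ l < m * (u + t) + c, digit l (splice a ((m + n) * u + c) b) q = 0 := by
  obtain ⟨q, hq, hq0⟩ := Submodule.exists_mem_ne_zero_of_ne_bot hb
  rw [mem_hankelKer] at hq
  obtain ⟨d, hd, i, hi⟩ := exists_degreeLT_succ_coeff_ne_zero hq0
  have hdt : d < n * (u + t) := by
    by_contra! h
    exact hi (mem_degreeLT_iff_coeff_eq_zero.mp (hq.1 i) d h)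
  have digit_eq {l : ℕ} (hl : d + 1 + l ≤ (m + n) * u + c) :
      digit l (splice a ((m + n) * u + c) b) q = digit l a q :=
    digit_congr hd fun j hj => splice_of_lt a b (by omega)
  have hdu : n * u ≤ d := by
    by_contra! h
    refine hq0 ((Submodule.eq_bot_iff _).mp ha q (mem_hankelKer.mpr ⟨fun i =>
      degreeLT_mono h (hd i), fun l hl => ?_⟩))
    rw [← digit_eq (by rw [add_mul]; omega), hq.2 l (by rw [mul_add]; omega)]
  obtain ⟨j, rfl⟩ := Nat.exists_eq_add_of_le hdu
  rw [mul_add] at hdt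
  refine ⟨j, by omega, q, mem_hankelKer.mpr ⟨hd, fun l hl => ?_⟩, ⟨i, hi⟩, hq.2⟩
  rw [← digit_eq (by rw [add_mul]; omega), hq.2 l (by rw [mul_add]; omega)]

variable [Fintype F]

theorem card_exists_digit_eq_zero_mul_le (a : ℕ → ι → κ → F) (c u t j : ℕ) (hj : j < n * t) :
    #{b : Fin ((m + n) * t) → ι → κ → F | ∃ q ∈ hankelKer a (n * u + j + 1) (m * u + c - j),
      (∃ i, (q i).coeff (n * u + j) ≠ 0) ∧
        ∀ l < m * (u + t) + c, digit l (splice a ((m + n) * u + c) b) q = 0} *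
        Fintype.card F ^ (m * (n * t) + n * c) ≤
      Fintype.card F ^ (m * (j + 1) + kerDim c u a j) *
        Fintype.card F ^ (m * n * ((m + n) * t)) := by
  have hmu : (m + n) * u + c = m * u + n * u + c := by ring
  have hmt : (m + n) * t = m * t + n * t := by ring
  have hmut : m * (u + t) = m * u + m * t := mul_add ..
  set e := m * (u + t) + c - (m * u + c - j)
  have he : m * u + c - j + e = m * (u + t) + c := by omega
  refine Nat.le_of_mul_le_mul_right ?_ (pow_pos (Fintype.card_pos (α := F)) (n * m * u))
  calc _ ≤ #{b : Fin ((m + n) * t) → ι → κ → F |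
          ∃ q ∈ hankelKer a (n * u + j + 1) (m * u + c - j), (∃ i, (q i).coeff (n * u + j) ≠ 0) ∧
            ∀ l < e, digit (m * u + c - j + l) (splice a ((m + n) * u + c) b) q = 0} *
          Fintype.card F ^ (n * (m * u + c - j + e)) := by
        rw [he, mul_assoc, ← pow_add]
        refine Nat.mul_le_mul (Finset.card_le_card ?_) (by rw [hmut]; ring_nf; rfl)
        refine Finset.monotone_filter_right _ fun b _ => ?_
        rintro ⟨q, hq, hqd, hqb⟩
        exact ⟨q, hq, hqd, fun l hl => hqb _ (by omega)⟩
    _ ≤ _ := card_exists_splice_digits_eq_zero_mul_le a (by omega) (by omega)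
    _ = _ := by
        rw [kerDim]
        ring

theorem IsGood.two_mul_card_not_isGood_splice_le [Nonempty ι] [Nonempty κ] (ha : IsGood c u a)
    (hc : 3 ≤ c) (ht : c + 3 ≤ t) :
    2 * #{b : Fin ((m + n) * t) → ι → κ → F |
        ¬ IsGood c (u + t) (splice a ((m + n) * u + c) b)} ≤
      Fintype.card F ^ (m * n * ((m + n) * t)) := by
  set k := Fintype.card F
  set E : Finset (Fin ((m + n) * t) → ι → κ → F) :=
    {b | ¬ IsGood c (u + t) (splice a ((m + n) * u + c) b)}
  have hcover : E ⊆ (Finset.range (n * t)).biUnion fun j =>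
      {b | ∃ q ∈ hankelKer a (n * u + j + 1) (m * u + c - j), (∃ i, (q i).coeff (n * u + j) ≠ 0) ∧
        ∀ l < m * (u + t) + c, digit l (splice a ((m + n) * u + c) b) q = 0} := by
    intro b hb
    obtain ⟨j, hj, hq⟩ := ha.exists_digit_eq_zero_of_not_isGood (b := b) (by simpa [E] using hb)
    exact Finset.mem_biUnion.mpr ⟨j, Finset.mem_range.mpr hj, by simpa using hq⟩
  refine Nat.le_of_mul_le_mul_right ?_
    (pow_pos (Fintype.card_pos (α := F)) (m * (n * t) + n * c))
  calc 2 * #E * k ^ (m * (n * t) + n * c)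
      ≤ 2 * ∑ j ∈ Finset.range (n * t), k ^ (m * (j + 1) + kerDim c u a j) *
          k ^ (m * n * ((m + n) * t)) := by
        rw [mul_assoc]
        refine Nat.mul_le_mul_left 2 ((Nat.mul_le_mul_right _ ((Finset.card_le_card hcover).trans
          Finset.card_biUnion_le)).trans ?_)
        rw [Finset.sum_mul]
        exact Finset.sum_le_sum fun j hj =>
          card_exists_digit_eq_zero_mul_le a c u t j (Finset.mem_range.mp hj)
    _ ≤ k ^ (m * (n * t) + n * c) * k ^ (m * n * ((m + n) * t)) := by
        rw [← Finset.sum_mul, ← mul_assoc]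
        exact Nat.mul_le_mul_right _ (two_mul_sum_pow_add_le Fintype.one_lt_card Fintype.card_pos
          Fintype.card_pos hc ht ha.kerDim_le fun _ => ha.kerDim_eq_zero)
    _ = _ := mul_comm _ _

theorem IsGood.card_le_two_mul_card_isGood_splice [Nonempty ι] [Nonempty κ] (ha : IsGood c u a)
    (hc : 3 ≤ c) (ht : c + 3 ≤ t) :
    Fintype.card F ^ (m * n * ((m + n) * t)) ≤
      2 * #{b : Fin ((m + n) * t) → ι → κ → F |
        IsGood c (u + t) (splice a ((m + n) * u + c) b)} := by
  have hsplit := Finset.card_filter_add_card_filter_not (s := Finset.univ)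
    fun b : Fin ((m + n) * t) → ι → κ → F => IsGood c (u + t) (splice a ((m + n) * u + c) b)
  rw [Finset.card_univ, card_blocks] at hsplit
  have := ha.two_mul_card_not_isGood_splice_le hc ht
  omega

end Good

section Branching

variable {α : Type*}

theorem measurableSet_cylinder [MeasurableSpace α] [MeasurableSingletonClass α] (a : ℕ → α)
    (N : ℕ) : MeasurableSet (PiNat.cylinder a N) := by
  rw [PiNat.cylinder_eq_pi]
  exact MeasurableSet.pi (Finset.range N).countable_toSet fun i _ => measurableSet_singleton (a i)

theorem exists_mem_cylinder_of_nested {N : ℕ → ℕ} (hN : StrictMono N) {f : ℕ → ℕ → α}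
    (hf : ∀ i, f (i + 1) ∈ PiNat.cylinder (f i) (N i)) :
    ∃ a, ∀ i, a ∈ PiNat.cylinder (f i) (N i) := by
  have nested {i j : ℕ} (hij : i ≤ j) : f j ∈ PiNat.cylinder (f i) (N i) := by
    induction j, hij using Nat.le_induction with
    | base => exact PiNat.self_mem_cylinder _ _
    | succ j hij ih =>
      rw [← PiNat.mem_cylinder_iff_eq.mp ih]
      exact PiNat.cylinder_anti _ (hN.monotone hij) (hf j)
  refine ⟨fun l => f (l + 1) l, fun i l hl => ?_⟩
  rcases le_total i (l + 1) with h | h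
  · exact nested h l hl
  · exact (nested h l (hN.le_apply (x := l + 1))).symm

variable [Fintype α] {c M R : ℕ} {G : ℕ → Set (ℕ → α)}

/-- A tree of words of lengths `M i + c` over `α`, encoded by the sets `G i` of the sequences
whose prefix of length `M i + c` is a node, in which every node has at least `R` children. -/
structure IsBranching (c M R : ℕ) (G : ℕ → Set (ℕ → α)) : Prop where
  nonempty : (G 0).Nonempty
  mem_of_mem_cylinder {i : ℕ} {a b : ℕ → α} (ha : a ∈ G i)
    (hb : b ∈ PiNat.cylinder a (M * i + c)) : b ∈ G i
  le_card {i : ℕ} {a : ℕ → α} (ha : a ∈ G i) :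
    R ≤ #{b : Fin M → α | splice a (M * i + c) b ∈ G (i + 1)}

variable [MeasurableSpace α] [MeasurableSingletonClass α]

/- The children of a node are disjoint cylinders, so the lightest of them has at most the average
mass. -/
theorem IsBranching.exists_child (hG : IsBranching c M R G) (hR : 0 < R) (μ : Measure (ℕ → α))
    {i : ℕ} {a : ℕ → α} (ha : a ∈ G i) :
    ∃ a' ∈ G (i + 1), a' ∈ PiNat.cylinder a (M * i + c) ∧
      R * μ (PiNat.cylinder a' (M * (i + 1) + c)) ≤ μ (PiNat.cylinder a (M * i + c)) := by
  set N := M * i + c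
  have hN : M * (i + 1) + c = N + M := by ring
  let children : Finset (Fin M → α) := {b | splice a N b ∈ G (i + 1)}
  let mass (b : Fin M → α) : ℝ≥0∞ := μ (PiNat.cylinder (splice a N b) (N + M))
  have hchildren : R ≤ #children := hG.le_card ha
  obtain ⟨b, hb, hmin⟩ := Finset.exists_min_image children mass
    (Finset.card_pos.mp (hR.trans_le hchildren))
  refine ⟨splice a N b, by simpa [children] using hb, splice_mem_cylinder a N b, ?_⟩
  calc R * μ (PiNat.cylinder (splice a N b) (M * (i + 1) + c))
      ≤ #children * mass b := by
        rw [hN]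
        gcongr
    _ ≤ ∑ b' ∈ children, mass b' := by
        rw [← nsmul_eq_mul]
        exact Finset.card_nsmul_le_sum _ _ _ hmin
    _ = μ (⋃ b' ∈ children, PiNat.cylinder (splice a N b') (N + M)) :=
        (measure_biUnion_finset (fun b _ b' _ h => disjoint_cylinder_splice a N h)
          fun b' _ => measurableSet_cylinder _ _).symm
    _ ≤ μ (PiNat.cylinder a N) := by
        refine measure_mono (Set.iUnion₂_subset fun b' _ => ?_)
        rw [← PiNat.mem_cylinder_iff_eq.mp (splice_mem_cylinder a N b')]
        exact PiNat.cylinder_anti _ (Nat.le_add_right N M)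

theorem IsBranching.exists_branch (hG : IsBranching c M R G) (hR : 0 < R) (hM : 0 < M)
    (μ : Measure (ℕ → α)) :
    ∃ a, (∀ i, a ∈ G i) ∧
      ∀ i, R ^ i * μ (PiNat.cylinder a (M * i + c)) ≤ μ Set.univ := by
  obtain ⟨a₀, ha₀⟩ := hG.nonempty
  choose! child child_mem child_cylinder child_mass using
    fun (i : ℕ) (a : ℕ → α) (ha : a ∈ G i) => hG.exists_child hR μ ha
  let f (i : ℕ) : ℕ → α := i.rec a₀ child
  have f_mem (i : ℕ) : f i ∈ G i := by
    induction i with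
    | zero => exact ha₀
    | succ i ih => exact child_mem i _ ih
  have f_mass (i : ℕ) : R ^ i * μ (PiNat.cylinder (f i) (M * i + c)) ≤ μ Set.univ := by
    induction i with
    | zero => simpa using measure_mono (Set.subset_univ _)
    | succ i ih =>
      rw [pow_succ, mul_assoc]
      exact (mul_le_mul_right (child_mass i _ (f_mem i)) _).trans ih
  obtain ⟨a, ha⟩ := exists_mem_cylinder_of_nested (N := fun i => M * i + c)
    (strictMono_nat_of_lt_succ fun i => by rw [mul_add]; omega)
    fun i => child_cylinder i (f i) (f_mem i)
  refine ⟨a, fun i => hG.mem_of_mem_cylinder (f_mem i) (ha i), fun i => ?_⟩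
  rw [PiNat.mem_cylinder_iff_eq.mp (ha i)]
  exact f_mass i

end Branching

section Series

variable {F : Type} [Field F] {m n : ℕ}

/-- The embedding `𝔽[X] → ℒ`; the variable `X` is the series `T⁻¹`. -/
def ofPoly : F[X] →+* L F :=
  eval₂RingHom HahnSeries.C (HahnSeries.single (-1) 1)

theorem coeff_ofPoly_mul (p : F[X]) (x : L F) (e : ℤ) :
    (ofPoly p * x).coeff e = p.sum fun j b => b * x.coeff (e + j) := by
  rw [ofPoly, coe_eval₂RingHom, eval₂_eq_sum, sum_def, sum_def, Finset.sum_mul,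
    HahnSeries.coeff_sum]
  refine Finset.sum_congr rfl fun j _ => ?_
  rw [HahnSeries.single_pow, one_pow, mul_assoc, HahnSeries.C_mul_eq_smul]
  simp [HahnSeries.coeff_single_mul]

theorem coeff_ofPoly_neg (p : F[X]) (d : ℕ) :
    (ofPoly p).coeff (-d) = p.coeff d := by
  rw [← mul_one (ofPoly p), coeff_ofPoly_mul, sum_def]
  simp [HahnSeries.coeff_one, neg_add_eq_zero, eq_comm]

theorem coeff_ofPoly_of_pos (p : F[X]) {e : ℤ} (he : 0 < e) :
    (ofPoly p).coeff e = 0 := by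
  rw [← mul_one (ofPoly p), coeff_ofPoly_mul, sum_def]
  refine Finset.sum_eq_zero fun j _ => ?_
  rw [HahnSeries.coeff_one, if_neg (by omega), mul_zero]

theorem IsPoly.exists_ofPoly_eq {x : L F} (hx : IsPoly x) :
    ∃ p, ofPoly p = x := by
  set N := (-x.order).toNat + 1
  refine ⟨∑ j ∈ Finset.range N, monomial j (x.coeff (-j)), HahnSeries.ext (funext fun e => ?_)⟩
  rcases lt_or_ge 0 e with he | he
  · rw [coeff_ofPoly_of_pos _ he, hx e he]
  · obtain ⟨d, rfl⟩ := Int.exists_eq_neg_ofNat he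
    rw [coeff_ofPoly_neg]
    simp only [finsetSum_coeff, coeff_monomial, Finset.sum_ite_eq', Finset.mem_range]
    split_ifs with hd
    · rfl
    · exact (HahnSeries.coeff_eq_zero_of_lt_order (by omega)).symm

/-- The matrix whose `(i, ν)` entry is `∑ l, a l i ν • T ^ (o + l)`. -/
def ofDigits (o : ℤ) (a : ℕ → Fin m → Fin n → F) : Mat F m n :=
  Matrix.of fun i ν => HahnSeries.single o 1 * (PowerSeries.mk fun l => a l i ν : L F)

/-- The coefficients of `T ^ o`, `T ^ (o + 1)`, … of the entries of a matrix. -/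
def digits (o : ℤ) (A : Mat F m n) (l : ℕ) (i : Fin m) (ν : Fin n) : F :=
  (A i ν).coeff (o + l)

theorem digits_ofDigits (o : ℤ) (a : ℕ → Fin m → Fin n → F) :
    digits o (ofDigits o a) = a := by
  funext l i ν
  simp [digits, ofDigits, HahnSeries.coeff_single_mul, LaurentSeries.coeff_coe_powerSeries]

theorem coeff_ofDigits_of_lt (o : ℤ) (a : ℕ → Fin m → Fin n → F) (i : Fin m)
    (ν : Fin n) {e : ℤ} (he : e < o) : (ofDigits o a i ν).coeff e = 0 := by
  simp [ofDigits, HahnSeries.coeff_single_mul, PowerSeries.coeff_coe, he]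

theorem exists_coeff_eq_zero_of_lt_neg (A : Mat F m n) :
    ∃ p : ℕ, ∀ i ν, ∀ e < (-p : ℤ), (A i ν).coeff e = 0 := by
  refine ⟨∑ x : Fin m × Fin n, (-(A x.1 x.2).order).toNat, fun i ν e he => ?_⟩
  have hle : (-(A i ν).order).toNat ≤ ∑ x : Fin m × Fin n, (-(A x.1 x.2).order).toNat :=
    Finset.single_le_sum (f := fun x : Fin m × Fin n => (-(A x.1 x.2).order).toNat)
      (fun _ _ => Nat.zero_le _) (Finset.mem_univ (i, ν))
  exact HahnSeries.coeff_eq_zero_of_lt_order (by omega)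

theorem coeff_vecMul_ofPoly (p : Fin m → F[X]) (A : Mat F m n) (o : ℤ)
    (l : ℕ) (ν : Fin n) :
    (Matrix.vecMul (fun i => ofPoly (p i)) A ν).coeff (o + l) = digit l (digits o A) p ν := by
  rw [Matrix.vecMul, dotProduct, HahnSeries.coeff_sum, digit_apply, Finset.sum_apply]
  refine Finset.sum_congr rfl fun i _ => ?_
  rw [coeff_ofPoly_mul, sum_def, sum_def, Finset.sum_apply]
  refine Finset.sum_congr rfl fun j _ => ?_
  simp only [digits, Pi.smul_apply, smul_eq_mul, Nat.cast_add]
  congr 2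
  ring

end Series

section Norm

variable {m n : ℕ} {c t u : ℕ} {A : Mat 𝔽 m n}

variable (𝔽) in
theorem one_lt_card_real : (1 : ℝ) < Fintype.card 𝔽 :=
  Nat.one_lt_cast.mpr Fintype.one_lt_card

theorem zpow_neg_le_lnorm {x : L 𝔽} {e : ℤ} (h : x.coeff e ≠ 0) :
    (Fintype.card 𝔽 : ℝ) ^ (-e) ≤ lnorm x := by
  rw [lnorm, if_neg (by rintro rfl; simp at h)]
  exact zpow_le_zpow_right₀ (one_lt_card_real 𝔽).le
    (neg_le_neg (HahnSeries.order_le_of_coeff_ne_zero h))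

theorem lnorm_le_zpow_neg {x : L 𝔽} {e : ℤ} (h : ∀ e' < e, x.coeff e' = 0) :
    lnorm x ≤ (Fintype.card 𝔽 : ℝ) ^ (-e) := by
  unfold lnorm
  split_ifs with hx
  · positivity
  · have horder : e ≤ x.order := not_lt.mp fun hlt =>
      hx (HahnSeries.coeff_order_eq_zero.mp (h _ hlt))
    exact zpow_le_zpow_right₀ (one_lt_card_real 𝔽).le (neg_le_neg horder)

theorem lnorm_le_vnorm {ι : Type*} [Finite ι] (x : ι → L 𝔽) (i : ι) : lnorm (x i) ≤ vnorm x :=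
  le_ciSup (f := fun i => lnorm (x i)) (Set.finite_range _).bddAbove i

theorem lnorm_le_mnorm (A : Mat 𝔽 m n) (i : Fin m) (ν : Fin n) : lnorm (A i ν) ≤ mnorm A :=
  lnorm_le_vnorm (fun p : Fin m × Fin n => A p.1 p.2) (i, ν)

theorem coeff_eq_of_mem_mball {C : Mat 𝔽 m n} {ρ : ℝ} {e : ℤ} (hA : A ∈ mball C ρ)
    (hρ : ρ < (Fintype.card 𝔽 : ℝ) ^ (-e)) (i : Fin m) (ν : Fin n) :
    (A i ν).coeff e = (C i ν).coeff e := by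
  by_contra hne
  have hcoeff : ((A - C) i ν).coeff e ≠ 0 := by
    simpa [sub_ne_zero] using hne
  exact hρ.not_ge (((zpow_neg_le_lnorm hcoeff).trans (lnorm_le_mnorm _ i ν)).trans hA)

theorem mem_mball_of_coeff_eq {C : Mat 𝔽 m n} {N : ℤ}
    (h : ∀ i ν, ∀ e < N, (A i ν).coeff e = (C i ν).coeff e) :
    A ∈ mball C ((Fintype.card 𝔽 : ℝ) ^ (-N)) :=
  Real.iSup_le (fun p => lnorm_le_zpow_neg fun e he => by simp [h p.1 p.2 e he]) (by positivity)

theorem zpow_neg_le_latDist {x : Fin n → L 𝔽} {ν : Fin n} {e : ℤ} (he : 0 < e)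
    (h : (x ν).coeff e ≠ 0) : (Fintype.card 𝔽 : ℝ) ^ (-e) ≤ latDist x := by
  refine le_csInf ⟨_, 0, fun i e _ => rfl, rfl⟩ ?_
  rintro _ ⟨p, hp, rfl⟩
  have hsub : (x ν - p ν).coeff e ≠ 0 := by simpa [hp ν e he] using h
  exact (zpow_neg_le_lnorm hsub).trans (lnorm_le_vnorm (fun i => x i - p i) ν)

theorem pow_le_vnorm_ofPoly {p : Fin m → 𝔽[X]} {d : ℕ} {i : Fin m} (h : (p i).coeff d ≠ 0) :
    (Fintype.card 𝔽 : ℝ) ^ d ≤ vnorm fun i => ofPoly (p i) := by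
  rw [← coeff_ofPoly_neg] at h
  simpa using (zpow_neg_le_lnorm h).trans (lnorm_le_vnorm (fun i => ofPoly (p i)) i)

theorem IsGood.zpow_neg_le_latDist (hA : IsGood c u (digits 1 A)) {p : Fin m → 𝔽[X]} (hp : p ≠ 0)
    (hdeg : ∀ i, p i ∈ degreeLT 𝔽 (n * u)) :
    (Fintype.card 𝔽 : ℝ) ^ (-(m * u + c : ℤ)) ≤
      latDist (Matrix.vecMul (fun i => ofPoly (p i)) A) := by
  have hker : p ∉ hankelKer (digits 1 A) (n * u) (m * u + c) := by
    have hbot : hankelKer (digits 1 A) (n * u) (m * u + c) = ⊥ := by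
      simpa only [IsGood, Fintype.card_fin] using hA
    simpa [hbot] using hp
  obtain ⟨l, hl, hdigit⟩ : ∃ l < m * u + c, digit l (digits 1 A) p ≠ 0 := by
    simpa [mem_hankelKer, hdeg] using hker
  obtain ⟨ν, hν⟩ := Function.ne_iff.mp hdigit
  rw [Pi.zero_apply, ← coeff_vecMul_ofPoly] at hν
  refine le_trans ?_ (FSBad.zpow_neg_le_latDist (by omega) hν)
  exact zpow_le_zpow_right₀ (one_lt_card_real 𝔽).le (by omega)

theorem mem_Bad_of_isGood (hn : 0 < n) (ht : 0 < t) (hA : ∀ i, IsGood c (t * i) (digits 1 A)) :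
    A ∈ Bad 𝔽 m n := by
  have hk := one_lt_card_real 𝔽
  set k := (Fintype.card 𝔽 : ℝ)
  refine ⟨k ^ (-(m * (n * t) + n * c + 1 : ℤ)), by positivity, fun q hq hq0 => ?_⟩
  choose p hp using fun i => (hq i).exists_ofPoly_eq
  obtain rfl : (fun i => ofPoly (p i)) = q := funext hp
  have hp0 : p ≠ 0 := by
    rintro rfl
    exact hq0 (funext fun _ => map_zero ofPoly)
  obtain ⟨d, hdeg, i₀, hd⟩ := exists_degreeLT_succ_coeff_ne_zero hp0
  set u := t * (d / (n * t) + 1)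
  have hdu : d + 1 ≤ n * u := by
    simpa only [u, ← mul_assoc, Nat.succ_le_iff] using Nat.lt_mul_div_succ d (Nat.mul_pos hn ht)
  have hud : n * u ≤ d + n * t := by
    have := Nat.mul_div_le d (n * t)
    simp only [u]
    linarith
  have hdist : k ^ (-(m * u + c : ℤ)) ≤ latDist (Matrix.vecMul (fun i => ofPoly (p i)) A) :=
    (hA _).zpow_neg_le_latDist hp0 fun i => degreeLT_mono hdu (hdeg i)
  have hdist_nonneg : 0 ≤ latDist (Matrix.vecMul (fun i => ofPoly (p i)) A) :=
    le_trans (by positivity) hdist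
  have hnorm := pow_le_vnorm_ofPoly hd
  have hnorm_pos : 0 < vnorm fun i => ofPoly (p i) := lt_of_lt_of_le (by positivity) hnorm
  rw [gt_iff_lt, div_lt_iff₀ (by positivity)]
  calc k ^ (-(m * (n * t) + n * c + 1 : ℤ))
      < k ^ (-(m * u + c : ℤ) * (n : ℤ) + (d * m : ℕ)) := by
        have := Nat.mul_le_mul_left m hud
        refine zpow_lt_zpow_right₀ hk ?_
        zify at this
        push_cast
        linarith
    _ = (k ^ (-(m * u + c : ℤ))) ^ n * (k ^ d) ^ m := by
        rw [zpow_add₀ (by positivity), zpow_mul, zpow_natCast, zpow_natCast, pow_mul]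
    _ ≤ _ := by gcongr

end Norm

section HausdorffMeasure

variable {m n : ℕ} {s : ℝ} {E : Set (Mat 𝔽 m n)}

theorem hMeasure_eq_zero_iff :
    hMeasure s E = 0 ↔ ∀ δ : ℝ, 0 < δ → ∀ ε : ℝ≥0∞, 0 < ε →
      ∃ (C : ℕ → Mat 𝔽 m n) (ρ : ℕ → ℝ), (∀ i, 0 < ρ i ∧ ρ i < δ) ∧
        E ⊆ ⋃ i, mball (C i) (ρ i) ∧ ∑' i, ENNReal.ofReal (ρ i ^ s) < ε := by
  simp only [hMeasure, ENNReal.iSup_eq_zero]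
  refine forall₂_congr fun δ _ => ?_
  rw [← ENNReal.bot_eq_zero, iInf_eq_bot]
  simp only [iInf_lt_iff, exists_prop, ENNReal.bot_eq_zero]

theorem hdim_eq_of_forall {d : ℝ} (hd : 0 ≤ d)
    (hlt : ∀ s, 0 ≤ s → s < d → hMeasure s E ≠ 0) (hgt : ∀ s, d < s → hMeasure s E = 0) :
    hdim E = d := by
  refine csInf_eq_of_forall_ge_of_forall_gt_exists_lt
    ⟨d + 1, by positivity, hgt _ (lt_add_one d)⟩
    (fun s hs => not_lt.mp fun h => hlt s hs.1 h hs.2) fun s hs => ?_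
  obtain ⟨r, hdr, hrs⟩ := exists_between hs
  exact ⟨r, ⟨hd.trans hdr.le, hgt r hdr⟩, hrs⟩

theorem exists_zpow_neg_lt_and_pow_mul_rpow_le {k : ℝ} (hk : 1 < k) {d : ℕ} (hs : d < s) (p : ℕ)
    {δ ε : ℝ} (hδ : 0 < δ) (hε : 0 < ε) :
    ∃ N : ℕ, k ^ (-N : ℤ) < δ ∧ k ^ (d * (p + N)) * (k ^ (-N : ℤ)) ^ s ≤ ε := by
  have hk0 : 0 < k := zero_lt_one.trans hk
  have hratio : k ^ ((d : ℝ) - s) < 1 := Real.rpow_lt_one_of_one_lt_of_neg hk (sub_neg.mpr hs)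
  have hpow := tendsto_pow_atTop_nhds_zero_of_lt_one (by positivity) hratio
  have hinv := tendsto_pow_atTop_nhds_zero_of_lt_one (by positivity) (inv_lt_one_of_one_lt₀ hk)
  obtain ⟨N, hN, hNδ⟩ := ((hpow.eventually_lt_const (show 0 < ε / k ^ (d * p) by positivity)).and
    (hinv.eventually_lt_const hδ)).exists
  refine ⟨N, by rwa [zpow_neg, zpow_natCast, ← inv_pow], ?_⟩
  calc k ^ (d * (p + N)) * (k ^ (-N : ℤ)) ^ s
      = (k ^ ((d : ℝ) - s)) ^ N * k ^ (d * p) := by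
        simp only [← Real.rpow_natCast, ← Real.rpow_intCast, ← Real.rpow_mul hk0.le,
          ← Real.rpow_add hk0]
        push_cast
        ring_nf
    _ ≤ ε := ((lt_div_iff₀ (by positivity)).mp hN).le

theorem mem_mball_ofDigits_splice {A : Mat 𝔽 m n} {o : ℤ}
    (hA : ∀ i ν, ∀ e < o, (A i ν).coeff e = 0) (M : ℕ) :
    A ∈ mball (ofDigits o (splice 0 0 fun l : Fin M => digits o A l))
      ((Fintype.card 𝔽 : ℝ) ^ (-(o + M))) := by
  refine mem_mball_of_coeff_eq fun i ν e he => ?_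
  rcases lt_or_ge e o with heo | heo
  · rw [hA i ν e heo, coeff_ofDigits_of_lt _ _ _ _ heo]
  · obtain ⟨l, rfl⟩ := Int.le.dest heo
    have hl : l < M := by omega
    have hsplice : splice 0 0 (fun l : Fin M => digits o A l) l = digits o A l := by
      simpa using splice_add 0 0 (fun l : Fin M => digits o A l) ⟨l, hl⟩
    change digits o A l i ν = digits o (ofDigits o _) l i ν
    rw [digits_ofDigits, hsplice]

theorem iUnion_mball_ofDigits_splice_eq_univ (N : ℕ → ℕ) :
    ⋃ x : Σ p, Fin (p + N p) → Fin m → Fin n → 𝔽,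
      mball (ofDigits (-x.1) (splice 0 0 x.2)) ((Fintype.card 𝔽 : ℝ) ^ (-N x.1 : ℤ)) =
        Set.univ := by
  refine Set.eq_univ_of_forall fun A => ?_
  obtain ⟨p, hp⟩ := exists_coeff_eq_zero_of_lt_neg A
  refine Set.mem_iUnion.mpr ⟨⟨p, fun l => digits (-p) A l⟩, ?_⟩
  simpa using mem_mball_ofDigits_splice hp (p + N p)

theorem hMeasure_eq_zero_of_lt (hs : (m : ℝ) * n < s) (E : Set (Mat 𝔽 m n)) :
    hMeasure s E = 0 := by
  refine hMeasure_eq_zero_iff.mpr fun δ hδ ε hε => ?_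
  have hk := one_lt_card_real 𝔽
  set k := (Fintype.card 𝔽 : ℝ)
  obtain ⟨ε', hε', hsum⟩ := ENNReal.exists_pos_sum_of_countable hε.ne' ℕ
  choose N hNδ hNε using fun p => exists_zpow_neg_lt_and_pow_mul_rpow_le hk (d := m * n)
    (by exact_mod_cast hs) p hδ (NNReal.coe_pos.mpr (hε' p))
  let I := Σ p, Fin (p + N p) → Fin m → Fin n → 𝔽
  have : Infinite I := Infinite.of_injective (fun p => ⟨p, 0⟩) fun _ _ h => congrArg Sigma.fst h
  obtain ⟨_⟩ := nonempty_denumerable I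
  let f : ℕ ≃ I := (Denumerable.eqv I).symm
  refine ⟨fun j => ofDigits (-(f j).1) (splice 0 0 (f j).2), fun j => k ^ (-N (f j).1 : ℤ),
    fun j => ⟨by positivity, hNδ _⟩, ?_, ?_⟩
  · rw [f.surjective.iUnion_comp fun x : I =>
      mball (ofDigits (-x.1) (splice 0 0 x.2)) (k ^ (-N x.1 : ℤ))]
    exact (Set.subset_univ E).trans (iUnion_mball_ofDigits_splice_eq_univ N).ge
  · rw [f.tsum_eq fun x : I => ENNReal.ofReal ((k ^ (-N x.1 : ℤ)) ^ s), ENNReal.tsum_sigma']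
    refine (ENNReal.tsum_le_tsum fun p => ?_).trans_lt hsum
    have hcard : (Fintype.card (Fin (p + N p) → Fin m → Fin n → 𝔽) : ℝ) =
        k ^ (m * n * (p + N p)) := by
      simp only [Fintype.card_fun, Fintype.card_fin, Nat.cast_pow]
      rw [← pow_mul, ← pow_mul, ← mul_assoc, mul_comm n m]
    dsimp only
    rw [tsum_fintype, Finset.sum_const, Finset.card_univ, nsmul_eq_mul, ← ENNReal.ofReal_natCast,
      ← ENNReal.ofReal_mul (by positivity), hcard, ← ENNReal.ofReal_coe_nnreal]
    exact ENNReal.ofReal_le_ofReal (hNε p)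

theorem digits_mem_cylinder_of_mem_mball {a : ℕ → Fin m → Fin n → 𝔽} {C : Mat 𝔽 m n} {ρ : ℝ}
    {N : ℕ} (ha : ofDigits 1 a ∈ mball C ρ) (hρ : ρ ≤ ((Fintype.card 𝔽 : ℝ) ^ (N + 1))⁻¹) :
    digits 1 C ∈ PiNat.cylinder a N := by
  intro l hl
  funext i ν
  have hρ' : ρ < (Fintype.card 𝔽 : ℝ) ^ (-(1 + l : ℤ)) := by
    rw [← zpow_natCast, ← zpow_neg] at hρ
    exact hρ.trans_lt (zpow_lt_zpow_right₀ (one_lt_card_real 𝔽) (by omega))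
  calc digits 1 C l i ν = digits 1 (ofDigits 1 a) l i ν := (coeff_eq_of_mem_mball ha hρ' i ν).symm
    _ = a l i ν := by rw [digits_ofDigits]

theorem exists_le_inv_pow_and_inv_pow_le {k ρ : ℝ} (hk : 1 < k) {c M : ℕ} (hM : 0 < M)
    (hρ : 0 < ρ) (hρc : ρ ≤ (k ^ c)⁻¹) :
    ∃ i : ℕ, ρ ≤ (k ^ (M * i + c))⁻¹ ∧ (k ^ (M + c))⁻¹ ≤ (k ^ M) ^ i * ρ := by
  have : 0 < k := zero_lt_one.trans hk
  have hone : 1 ≤ 1 / (k ^ c * ρ) := by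
    rwa [le_div_iff₀ (by positivity), one_mul, ← le_inv_mul_iff₀ (by positivity), mul_one]
  obtain ⟨i, hle, hlt⟩ := exists_nat_pow_near hone (one_lt_pow₀ hk hM.ne')
  rw [le_div_iff₀ (by positivity)] at hle
  rw [div_lt_iff₀ (by positivity), pow_succ] at hlt
  refine ⟨i, ?_, ?_⟩
  · rw [← one_div, le_div_iff₀ (by positivity), pow_add, pow_mul]
    linarith
  · rw [← one_div, div_le_iff₀ (by positivity), pow_add]
    linarith

/-- The weights `ρ x ^ s` of a cover by balls, transferred to the digit sequences of their
centres. -/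
def coverMeasure [MeasurableSpace 𝔽] (s : ℝ) (C : ℕ → Mat 𝔽 m n) (ρ : ℕ → ℝ) :
    Measure (ℕ → Fin m → Fin n → 𝔽) :=
  Measure.sum fun x => ENNReal.ofReal (ρ x ^ s) • Measure.dirac (digits 1 (C x))

theorem ofReal_rpow_le_coverMeasure_cylinder [MeasurableSpace 𝔽] (s : ℝ) {C : ℕ → Mat 𝔽 m n}
    {ρ : ℕ → ℝ} {a : ℕ → Fin m → Fin n → 𝔽} {x N : ℕ} (ha : ofDigits 1 a ∈ mball (C x) (ρ x))
    (hρ : ρ x ≤ ((Fintype.card 𝔽 : ℝ) ^ (N + 1))⁻¹) :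
    ENNReal.ofReal (ρ x ^ s) ≤ coverMeasure s C ρ (PiNat.cylinder a N) := by
  refine le_trans ?_ ((ENNReal.le_tsum x).trans (Measure.le_sum_apply _ _))
  rw [Measure.smul_apply, Measure.dirac_apply_of_mem (digits_mem_cylinder_of_mem_mball ha hρ),
    smul_eq_mul, mul_one]

/- If the cover were too light, the branch along which `coverMeasure` decays fastest would escape
it. -/
theorem hMeasure_ne_zero_of_isBranching {c M R : ℕ} {G : ℕ → Set (ℕ → Fin m → Fin n → 𝔽)}
    (hG : IsBranching c M R G) (hM : 0 < M) (hs : 0 ≤ s)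
    (hR : ((Fintype.card 𝔽 : ℝ) ^ M) ^ s ≤ R) (hE : ∀ a, (∀ i, a ∈ G i) → ofDigits 1 a ∈ E) :
    hMeasure s E ≠ 0 := by
  intro hzero
  have hk := one_lt_card_real 𝔽
  set k := (Fintype.card 𝔽 : ℝ)
  have : 0 < k := zero_lt_one.trans hk
  obtain ⟨C, ρ, hρ, hcover, hsum⟩ := hMeasure_eq_zero_iff.mp hzero (k ^ (c + 1))⁻¹ (by positivity)
    (ENNReal.ofReal (((k ^ (M + (c + 1)))⁻¹) ^ s)) (ENNReal.ofReal_pos.mpr (by positivity))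
  let _ : MeasurableSpace 𝔽 := ⊤
  have hR0 : 0 < R :=
    Nat.cast_pos.mp (lt_of_lt_of_le (show 0 < (k ^ M) ^ s by positivity) hR)
  obtain ⟨a, ha, hmass⟩ := hG.exists_branch hR0 hM (coverMeasure s C ρ)
  obtain ⟨x, hx⟩ := Set.mem_iUnion.mp (hcover (hE a ha))
  obtain ⟨hρ0, hρc⟩ := hρ x
  obtain ⟨i, hupper, hlower⟩ := exists_le_inv_pow_and_inv_pow_le hk hM hρ0 hρc.le
  have hweight : ((k ^ (M + (c + 1)))⁻¹) ^ s ≤ R ^ i * ρ x ^ s :=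
    calc ((k ^ (M + (c + 1)))⁻¹) ^ s ≤ ((k ^ M) ^ i * ρ x) ^ s := by gcongr
      _ = ((k ^ M) ^ s) ^ i * ρ x ^ s := by
        rw [Real.mul_rpow (by positivity) hρ0.le, Real.rpow_pow_comm (by positivity)]
      _ ≤ R ^ i * ρ x ^ s := by gcongr
  refine hsum.not_ge ?_
  calc ENNReal.ofReal (((k ^ (M + (c + 1)))⁻¹) ^ s)
      ≤ R ^ i * ENNReal.ofReal (ρ x ^ s) := by
        refine (ENNReal.ofReal_le_ofReal hweight).trans_eq ?_
        rw [ENNReal.ofReal_mul (by positivity), ENNReal.ofReal_pow (by positivity),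
          ENNReal.ofReal_natCast]
    _ ≤ R ^ i * coverMeasure s C ρ (PiNat.cylinder a (M * i + c)) := by
        gcongr
        exact ofReal_rpow_le_coverMeasure_cylinder s hx hupper
    _ ≤ coverMeasure s C ρ Set.univ := hmass i
    _ = ∑' x, ENNReal.ofReal (ρ x ^ s) := by simp [coverMeasure]

end HausdorffMeasure

section LowerBound

theorem isBranching_isGood {F ι κ : Type*} [Field F] [Fintype F] [Fintype ι] [Fintype κ]
    [Nonempty ι] [Nonempty κ] {c t R : ℕ} (hc : 3 ≤ c) (ht : c + 3 ≤ t)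
    (hR : 2 * R ≤ Fintype.card F ^
      (Fintype.card ι * Fintype.card κ * ((Fintype.card ι + Fintype.card κ) * t))) :
    IsBranching c ((Fintype.card ι + Fintype.card κ) * t) R
      fun i => {a : ℕ → ι → κ → F | IsGood c (t * i) a} where
  nonempty := ⟨0, isGood_zero c 0⟩
  mem_of_mem_cylinder ha hb := ha.congr fun l hl => (hb l (by rwa [mul_assoc])).symm
  le_card ha := by
    have := hR.trans (ha.card_le_two_mul_card_isGood_splice hc ht)
    simpa only [mul_assoc, mul_add_one, Set.mem_ofPred_eq] using
      Nat.le_of_mul_le_mul_left this two_pos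

theorem exists_rpow_le_pow {k s : ℝ} (hk : 1 < k) {d b : ℕ} (hb : 0 < b)
    (hs0 : 0 ≤ s) (hs : s < d) (t₀ : ℕ) :
    ∃ t ≥ t₀, ∃ e, d * (b * t) = e + 1 ∧ (k ^ (b * t)) ^ s ≤ k ^ e := by
  obtain ⟨t₁, ht₁⟩ := exists_nat_ge (1 / (d - s))
  have hgap : 1 ≤ (d - s) * t₁ := by
    rwa [div_le_iff₀' (sub_pos.mpr hs)] at ht₁
  set t := t₀ + t₁
  have hle : s * (b * t : ℕ) ≤ (d * (b * t) : ℕ) - 1 := by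
    have ht : (t₁ : ℝ) ≤ (b * t : ℕ) := by
      exact_mod_cast (Nat.le_add_left t₁ t₀).trans (Nat.le_mul_of_pos_left t hb)
    have := mul_le_mul_of_nonneg_left ht (sub_pos.mpr hs).le
    push_cast at this ⊢
    linarith
  have hpos : 1 ≤ d * (b * t) := by
    have : (0 : ℝ) ≤ (d * (b * t) : ℕ) - 1 := le_trans (by positivity) hle
    exact_mod_cast sub_nonneg.mp this
  obtain ⟨e, he⟩ := Nat.exists_eq_add_of_le' hpos
  refine ⟨t, Nat.le_add_right t₀ t₁, e, he, ?_⟩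
  rw [he, Nat.cast_succ, add_sub_cancel_right, mul_comm] at hle
  rw [← Real.rpow_natCast, ← Real.rpow_natCast, ← Real.rpow_mul (by positivity)]
  exact Real.rpow_le_rpow_of_exponent_le hk.le hle

theorem hMeasure_Bad_ne_zero {m n : ℕ} (hm : 0 < m) (hn : 0 < n) {s : ℝ} (hs0 : 0 ≤ s)
    (hs : s < (m : ℝ) * n) : hMeasure s (Bad 𝔽 m n) ≠ 0 := by
  have := Fin.pos_iff_nonempty.mp hm
  have := Fin.pos_iff_nonempty.mp hn
  obtain ⟨t, ht, e, he, hpow⟩ := exists_rpow_le_pow (one_lt_card_real 𝔽) (d := m * n)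
    (Nat.add_pos_left hm n) hs0 (by exact_mod_cast hs) 6
  have hcard : 2 * Fintype.card 𝔽 ^ e ≤ Fintype.card 𝔽 ^ (m * n * ((m + n) * t)) := by
    rw [he, pow_succ']
    exact Nat.mul_le_mul_right _ Fintype.one_lt_card
  have hbranching : IsBranching 3 ((m + n) * t) (Fintype.card 𝔽 ^ e)
      fun i => {a : ℕ → Fin m → Fin n → 𝔽 | IsGood 3 (t * i) a} := by
    convert isBranching_isGood (F := 𝔽) (ι := Fin m) (κ := Fin n) le_rfl ht
      (by simpa only [Fintype.card_fin] using hcard) <;> exact (Fintype.card_fin _).symm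
  refine hMeasure_ne_zero_of_isBranching hbranching (by positivity) hs0
    (by exact_mod_cast hpow) fun a ha => ?_
  exact mem_Bad_of_isGood hn (by omega : 0 < t) fun i => by rw [digits_ofDigits]; exact ha i

end LowerBound

/-- **Theorem (Statement 0).** For all positive integers `m`, `n`, the set `𝔅(m,n)` of
badly approximable systems of `m` linear forms in `n` variables over `ℒ` has
Hausdorff dimension `mn`. -/
theorem hausdorff_dimension_of_Bad (𝔽 : Type) [Field 𝔽] [Fintype 𝔽]
    (m n : ℕ) (hm : 0 < m) (hn : 0 < n) :
    hdim (Bad 𝔽 m n) = (m : ℝ) * n := by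
  refine hdim_eq_of_forall (by positivity) ?_ ?_
  · exact fun s hs0 hs => hMeasure_Bad_ne_zero hm hn hs0 hs
  · exact fun s hs => hMeasure_eq_zero_of_lt hs _

end FSBad
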